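/- Let (α, 𝔄) and (β, 𝔅) be standard Borel spaces. Then the Cartesian-product map, which sends a pair (D, E) consisting of a finite multiset D over α and a finite multiset E over β to the finite multiset D × E over α × β containing each pair (a, b) with multiplicity equal to the product of the multiplicities of a in D and b in E, is measurable with respect to the product σ-algebra 𝔠_α ⊗ 𝔠_β of the counting σ-algebras on the domain and the counting σ-algebra 𝔠_{α×β} (with respect to the product σ-algebra 𝔄 ⊗ 𝔅 on α × β) on the codomain. -/

import Mathlib

open MeasureTheory

/- `bagCount F D` is `|D|_F`: the number of elements of the finite bag (multiset) `D`
that lie in the set `F`, counted with multiplicity. -/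
open Classical in
noncomputable def bagCount {α : Type*} (F : Set α) (D : Multiset α) : ℕ :=
  Multiset.countP (fun a => a ∈ F) D

/-- The counting event `#(F, n)`: all finite bags `D` with `|D|_F = n`. -/
def countingEvent {α : Type*} (F : Set α) (n : ℕ) : Set (Multiset α) :=
  {D : Multiset α | bagCount F D = n}

/-- The counting σ-algebra `𝔠` on finite bags (multisets) over a measurable space `α`:
the σ-algebra generated by the counting events `#(F, n)` for measurable `F ⊆ α` and `n ∈ ℕ`. -/
def countingSigmaAlgebra (α : Type*) [MeasurableSpace α] : MeasurableSpace (Multiset α) :=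
  MeasurableSpace.generateFrom
    {A : Set (Multiset α) | ∃ (F : Set α) (n : ℕ), MeasurableSet F ∧ A = countingEvent F n}

open Classical in
theorem bagCount_cons_aux {α : Type*} (F : Set α) (a : α) (D : Multiset α) :
    bagCount F (a ::ₘ D) = bagCount F D + if a ∈ F then 1 else 0 := by
  unfold bagCount
  rw [Multiset.countP_cons]

theorem bagCount_zero_aux {α : Type*} (F : Set α) : bagCount F (0 : Multiset α) = 0 := by
  simp [bagCount]

theorem bagCount_add_aux {α : Type*} (F : Set α) (D E : Multiset α) :
    bagCount F (D + E) = bagCount F D + bagCount F E := by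
  simp [bagCount]

theorem bagCount_compl_aux {α : Type*} (F : Set α) (D : Multiset α) :
    bagCount Fᶜ D = bagCount Set.univ D - bagCount F D := by
  have : bagCount Set.univ D = bagCount Fᶜ D + bagCount F D := by
    induction D using Multiset.induction_on with
    | empty => simp [bagCount_zero_aux]
    | cons a D ih =>
      simp only [bagCount_cons_aux, ih]
      by_cases h : a ∈ F <;> simp [h] <;> omega
  omega

theorem bagCount_iUnion_aux {α : Type*} (f : ℕ → Set α)
    (hf : Pairwise (Function.onFun Disjoint f)) (D : Multiset α) :
    (bagCount (⋃ i, f i) D : ENNReal) = ∑' i, (bagCount (f i) D : ENNReal) := by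
  induction D using Multiset.induction_on with
  | empty => simp [bagCount_zero_aux]
  | cons a D ih =>
    simp only [bagCount_cons_aux, Nat.cast_add, ih, ENNReal.tsum_add]
    congr 1
    by_cases h : a ∈ ⋃ i, f i
    · obtain ⟨i, hi⟩ := Set.mem_iUnion.1 h
      rw [tsum_eq_single i]
      · simp [h, hi]
      · intro j hj
        have : a ∉ f j := fun hj' => Set.disjoint_left.1 (hf hj) hj' hi
        simp [this]
    · have h' : ∀ i, a ∉ f i := fun i hi => h (Set.mem_iUnion.2 ⟨i, hi⟩)
      rw [if_neg h]
      simp [h']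

theorem bagCount_prod_aux {α β : Type*} (s : Set α) (t : Set β) (D : Multiset α)
    (E : Multiset β) :
    bagCount (s ×ˢ t) (D ×ˢ E) = bagCount s D * bagCount t E := by
  induction D using Multiset.induction_on with
  | empty => simp [bagCount_zero_aux]
  | cons a D ih =>
    rw [Multiset.cons_product, bagCount_add_aux, ih, bagCount_cons_aux, add_mul, add_comm]
    congr 1
    clear ih
    induction E using Multiset.induction_on with
    | empty => simp [bagCount_zero_aux]
    | cons b E ih =>
      rw [Multiset.map_cons, bagCount_cons_aux, bagCount_cons_aux, ih]
      by_cases h : a ∈ s <;> by_cases h' : b ∈ t <;> simp [h, h']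

theorem measurable_bagCount_aux {α : Type*} [MeasurableSpace α] {F : Set α}
    (hF : MeasurableSet F) : Measurable[countingSigmaAlgebra α] (bagCount F) := by
  letI := countingSigmaAlgebra α
  refine measurable_to_countable' fun n => ?_
  exact MeasurableSpace.measurableSet_generateFrom ⟨F, n, hF, rfl⟩

theorem measurable_bagCount_prod_aux {α β : Type*} [MeasurableSpace α] [MeasurableSpace β]
    {F : Set (α × β)} (hF : MeasurableSet F) :
    @Measurable (Multiset α × Multiset β) ℕ
      (@Prod.instMeasurableSpace _ _ (countingSigmaAlgebra α) (countingSigmaAlgebra β)) _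
      (fun p => bagCount F (p.1 ×ˢ p.2)) := by
  letI := countingSigmaAlgebra α
  letI := countingSigmaAlgebra β
  have rect : ∀ (s : Set α) (t : Set β), MeasurableSet s → MeasurableSet t →
      Measurable (fun p : Multiset α × Multiset β => bagCount (s ×ˢ t) (p.1 ×ˢ p.2)) := by
    intro s t hs ht
    simp only [bagCount_prod_aux]
    exact ((measurable_bagCount_aux hs).comp measurable_fst).mul
      ((measurable_bagCount_aux ht).comp measurable_snd)
  induction F, hF using MeasurableSpace.induction_on_inter generateFrom_prod.symm
    isPiSystem_prod with
  | empty => simp [bagCount]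
  | basic u hu =>
    obtain ⟨s, hs, t, ht, rfl⟩ := hu
    exact rect s t hs ht
  | compl u hu ih =>
    simp only [bagCount_compl_aux u]
    have := rect Set.univ Set.univ .univ .univ
    rw [Set.univ_prod_univ] at this
    exact this.sub ih
  | iUnion f hd hm ih =>
    have h1 : Measurable (fun p : Multiset α × Multiset β =>
        (bagCount (⋃ i, f i) (p.1 ×ˢ p.2) : ENNReal)) := by
      simp only [bagCount_iUnion_aux f hd]
      exact Measurable.ennreal_tsum fun i => measurable_from_nat.comp (ih i)
    refine measurable_to_countable' fun n => ?_
    convert h1 (measurableSet_singleton (n : ENNReal)) using 1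
    ext p
    simp

/-- For standard Borel spaces `α` and `β`, the Cartesian-product map,
sending a pair `(D, E)` of finite bags over `α` resp. `β` to the bag `D ×ˢ E` over
`α × β` (each pair `(a, b)` having multiplicity the product of the multiplicities of
`a` in `D` and `b` in `E`), is measurable w.r.t. the product of the counting
σ-algebras on the domain and the counting σ-algebra (over the product σ-algebra on
`α × β`) on the codomain. -/
theorem measurable_bag_product
    {α β : Type*} [MeasurableSpace α] [StandardBorelSpace α]
    [MeasurableSpace β] [StandardBorelSpace β] :
    @Measurable (Multiset α × Multiset β) (Multiset (α × β))
      (@Prod.instMeasurableSpace _ _ (countingSigmaAlgebra α) (countingSigmaAlgebra β))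
      (countingSigmaAlgebra (α × β))
      (fun p : Multiset α × Multiset β => p.1 ×ˢ p.2) := by
  refine @measurable_generateFrom _ _ (@Prod.instMeasurableSpace _ _ (countingSigmaAlgebra α)
    (countingSigmaAlgebra β)) _ _ ?_
  rintro _ ⟨F, n, hF, rfl⟩
  exact measurable_bagCount_prod_aux hF (measurableSet_singleton n)
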